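/- Let X be an infinite semigroup satisfying properties (1) and (2). Let S ⊆ M(X) be closed under the convolution ⋆ (so S with ⋆ is a semigroup) and suppose K ⊆ S. Then the topological centre Λ(S) = {μ ∈ S | the mapping ν ↦ μ⋆ν from S to S is continuous for the weak* topology} equals the set of ℓ¹-representable elements of S. -/

import Mathlib

open BoundedContinuousFunction NormedSpace

section ConvDefs

variable {X Y Z : Type*} [TopologicalSpace X] [DiscreteTopology X]
  [TopologicalSpace Y] [DiscreteTopology Y] [TopologicalSpace Z] [DiscreteTopology Z]

/-- The inner integral: `x ↦ ν (y ↦ f (p x y))`, as a bounded function on `X`. -/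
noncomputable def innerConv (p : X → Y → Z) (ν : StrongDual ℝ (Y →ᵇ ℝ)) (f : Z →ᵇ ℝ) : X →ᵇ ℝ :=
  BoundedContinuousFunction.ofNormedAddCommGroup
    (fun x => ν (f.compContinuous ⟨fun y => p x y, continuous_of_discreteTopology⟩))
    continuous_of_discreteTopology (‖ν‖ * ‖f‖)
    (fun x => by
      calc ‖ν (f.compContinuous ⟨fun y => p x y, continuous_of_discreteTopology⟩)‖
          ≤ ‖ν‖ * ‖f.compContinuous ⟨fun y => p x y, continuous_of_discreteTopology⟩‖ :=
            ν.le_opNorm _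
        _ ≤ ‖ν‖ * ‖f‖ := by
            gcongr
            exact f.norm_compContinuous_le _)

/-- The convolution `μ ⋆ ν` along the map `p`:
`(μ ⋆ ν) f = μ (x ↦ ν (y ↦ f (p x y)))`. -/
noncomputable def convMap (p : X → Y → Z) (μ : StrongDual ℝ (X →ᵇ ℝ)) (ν : StrongDual ℝ (Y →ᵇ ℝ)) :
    StrongDual ℝ (Z →ᵇ ℝ) :=
  LinearMap.mkContinuous
    { toFun := fun f => μ (innerConv p ν f)
      map_add' := fun f g => by
        rw [← map_add]
        refine congrArg μ ?_
        ext x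
        simp only [innerConv, coe_ofNormedAddCommGroup, coe_add, Pi.add_apply]
        exact map_add ν (f.compContinuous _) (g.compContinuous _)
      map_smul' := fun c f => by
        simp only [RingHom.id_apply]
        rw [← map_smul]
        refine congrArg μ ?_
        ext x
        simp only [innerConv, coe_ofNormedAddCommGroup, coe_smul, Pi.smul_apply]
        exact map_smul ν c (f.compContinuous _) }
    (‖μ‖ * ‖ν‖)
    (fun f => by
      calc ‖μ (innerConv p ν f)‖ ≤ ‖μ‖ * ‖innerConv p ν f‖ := μ.le_opNorm _
        _ ≤ ‖μ‖ * (‖ν‖ * ‖f‖) := by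
            gcongr
            exact norm_ofNormedAddCommGroup_le _
                (mul_nonneg (norm_nonneg ν) (norm_nonneg f)) _
        _ = ‖μ‖ * ‖ν‖ * ‖f‖ := by ring)

/-- `μ` is representable by an absolutely summable family (an element of `ℓ¹(X)`). -/
def L1Rep (μ : StrongDual ℝ (X →ᵇ ℝ)) : Prop :=
  ∃ g : X → ℝ, Summable (fun x => |g x|) ∧ ∀ f : X →ᵇ ℝ, μ f = ∑' x, g x * f x

/-- A functional is positive if it is nonnegative on nonnegative functions. -/
def PosFunc (μ : StrongDual ℝ (X →ᵇ ℝ)) : Prop :=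
  ∀ f : X →ᵇ ℝ, (∀ x, 0 ≤ f x) → 0 ≤ μ f

end ConvDefs

open Cardinal

/-!
An `ℓ¹` functional gives a weak* continuous map `ν ↦ μ ⋆ ν` because `(μ ⋆ ν) f` is `ν` applied to
one norm convergent series of translates of `f`. Conversely, continuity on the compact set `K`
yields: if `h (p x (y i)) → f x` for every `x`, then `(μ ⋆ δ_{y i}) h → μ f`. Property (2) lets one
choose by transfinite recursion points `y F`, indexed by the finite sets `F ⊆ X`, so that the
blocks `{p x (y F) | x ∈ F}` are pairwise disjoint, and property (1) makes `p · (y F)` injective on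
`F`; then `f` can be copied onto all blocks simultaneously. Rosenthal's lemma thins out the family
so that `μ ⋆ δ_{y F}` has small variation on the union of the other blocks, and what remains is a
finite sum, over `F`, approximating `μ f`. Its weights must be close to the point masses of `μ` for
all but fewer than `|X|` admissible `y`, since otherwise the exceptional `y` could be used in the
same construction with `f = 1_{x}`. Hence finite sums `∑ x ∈ F, μ {x} * f x` approximate `μ f`, and
`μ f = ∑' x, μ {x} * f x`.
-/

section Combinatorics

universe u

lemma mk_biUnion_finset_lt {ι α : Type u} {κ : Cardinal.{u}} (hκ : ℵ₀ ≤ κ) (F : Finset ι)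
    {B : ι → Set α} (hB : ∀ i ∈ F, #(B i) < κ) : #(⋃ i ∈ F, B i : Set α) < κ := by
  classical
  induction F using Finset.induction_on with
  | empty => simpa using aleph0_pos.trans_le hκ
  | insert a F _ ih =>
    rw [Finset.set_biUnion_insert]
    exact (mk_union_le _ _).trans_lt <| add_lt_of_lt hκ (hB a (Finset.mem_insert_self a F))
      (ih fun i hi ↦ hB i (Finset.mem_insert_of_mem hi))

lemma le_mk_sdiff_of_mk_lt {α : Type u} {κ : Cardinal.{u}} (hκ : ℵ₀ ≤ κ) {A B : Set α}
    (hA : κ ≤ #A) (hB : #B < κ) : κ ≤ #(A \ B : Set α) := by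
  by_contra! hlt
  have hcover : #A ≤ #(A \ B : Set α) + #B :=
    (mk_le_mk_of_subset (Set.sdiff_subset_iff.1 subset_rfl)).trans <|
      (Set.union_comm B (A \ B) ▸ mk_union_le (A \ B) B)
  exact (hA.trans hcover).not_gt (add_lt_of_lt hκ hlt hB)

lemma mk_iUnion_lt_of_finite {ι α : Type u} {κ : Cardinal.{u}} (hκ : ℵ₀ ≤ κ) (hι : #ι < κ)
    {f : ι → Set α} (hf : ∀ i, (f i).Finite) : #(⋃ i, f i) < κ := by
  rcases lt_or_ge #ι ℵ₀ with hfin | hinf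
  · have : Finite ι := lt_aleph0_iff_finite.1 hfin
    exact (Set.finite_iUnion hf).lt_aleph0.trans_le hκ
  · calc #(⋃ i, f i) ≤ sum fun i ↦ #(f i) := mk_iUnion_le_sum_mk
      _ ≤ sum fun _ : ι ↦ ℵ₀ := sum_le_sum _ _ fun i ↦ (hf i).lt_aleph0.le
      _ = #ι := by rw [sum_const', mul_aleph0_eq hinf]
      _ < κ := hι

lemma exists_pairwise_disjoint_of_finite {I Y Z : Type u} {κ : Cardinal.{u}} (hκ : ℵ₀ ≤ κ)
    (hI : #I ≤ κ) {Q : I → Set Y} {E : I → Y → Set Z} (hE : ∀ i y, (E i y).Finite)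
    (hQ : ∀ i, ∀ P : Set Z, #P < κ → ∃ y ∈ Q i, Disjoint (E i y) P) :
    ∃ y : I → Y, (∀ i, y i ∈ Q i) ∧ Pairwise (Function.onFun Disjoint fun i ↦ E i (y i)) := by
  obtain ⟨_, _, hord⟩ := exists_ord_eq_type_lt I
  have used_lt (i : I) (y : Set.Iio i → Y) : #(⋃ j : Set.Iio i, E j (y j)) < κ :=
    mk_iUnion_lt_of_finite hκ ((mk_Iio_lt i hord).trans_le hI) fun j ↦ hE j (y j)
  choose pick pick_mem pick_disjoint using hQ
  let y : I → Y := wellFounded_lt.fix fun i earlier ↦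
    pick i _ (used_lt i fun j ↦ earlier j j.2)
  have y_eq (i : I) : y i = pick i _ (used_lt i fun j ↦ y j.1) := wellFounded_lt.fix_eq _ i
  refine ⟨y, fun i ↦ y_eq i ▸ pick_mem _ _ _, ?_⟩
  have disjoint_of_lt {j i : I} (hji : j < i) : Disjoint (E i (y i)) (E j (y j)) := by
    rw [y_eq i]
    exact (pick_disjoint i _ _).mono_right
      (Set.subset_iUnion (fun k : Set.Iio i ↦ E k (y k)) ⟨j, hji⟩)
  exact fun i j hij ↦ hij.lt_or_gt.elim (fun h ↦ (disjoint_of_lt h).symm) disjoint_of_lt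

/-- The value that `v (φ k)` gives to the members of `φ` other than `φ k` itself; Rosenthal's
lemma finds subfamilies on which it is small. -/
def offDiagonal {ι κ : Type*} (v : ι → Set ι → ℝ) (φ : κ → ι) (k : κ) : ℝ :=
  v (φ k) (φ '' {k}ᶜ)

section Rosenthal

variable {ι κ κ' L : Type*} {v : ι → Set ι → ℝ}

lemma offDiagonal_comp_le (hmono : ∀ i, Monotone (v i)) (φ : κ → ι) {ψ : κ' → κ}
    (hψ : Function.Injective ψ) (k : κ') : offDiagonal v (φ ∘ ψ) k ≤ offDiagonal v φ (ψ k) := by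
  refine hmono _ ?_
  rw [Set.image_comp]
  exact Set.image_mono (Set.image_subset_iff.2 fun j hj ↦ hψ.ne hj)

lemma offDiagonal_cons_add_le (hmono : ∀ i, Monotone (v i))
    (hadd : ∀ i A B, Disjoint A B → v i A + v i B ≤ v i (A ∪ B)) {φ : List L → ι}
    (hφ : Function.Injective φ) (a : List L → L) (t : List L) :
    offDiagonal v (fun t ↦ φ (a t :: t)) t + offDiagonal v (fun b ↦ φ (b :: t)) (a t) ≤
      offDiagonal v φ (a t :: t) := by
  refine (hadd _ _ _ ?_).trans (hmono _ (Set.union_subset ?_ ?_))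
  · rw [Set.disjoint_left]
    rintro _ ⟨t', ht', rfl⟩ ⟨b, -, hb⟩
    exact ht' (List.cons.inj (hφ hb)).2.symm
  · rintro _ ⟨t', ht', rfl⟩
    exact ⟨_, fun h ↦ ht' (List.cons.inj h).2, rfl⟩
  · rintro _ ⟨b, hb, rfl⟩
    exact ⟨_, fun h ↦ hb (List.cons.inj h).1, rfl⟩

-- If no branch `l ↦ φ (l :: t)` works, choosing a bad `l` for every `t` gives a new tree that is
-- disjoint from the corresponding branches, so that its off-diagonal values drop by `ε`.
lemma exists_offDiagonal_le_of_le_nat_mul (hmono : ∀ i, Monotone (v i))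
    (hadd : ∀ i A B, Disjoint A B → v i A + v i B ≤ v i (A ∪ B)) {ε : ℝ} (hε : 0 ≤ ε) (n : ℕ)
    {φ : List L → ι} (hφ : Function.Injective φ) (hn : ∀ t, offDiagonal v φ t ≤ n * ε) :
    ∃ ψ : L → List L, Function.Injective ψ ∧ (∀ l, l ∈ ψ l) ∧
      ∀ l, offDiagonal v (φ ∘ ψ) l ≤ ε := by
  induction n generalizing φ with
  | zero =>
    refine ⟨fun l ↦ [l], List.singleton_injective, List.mem_singleton_self, fun l ↦ ?_⟩
    refine (offDiagonal_comp_le hmono φ List.singleton_injective l).trans ((hn [l]).trans ?_)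
    simpa using hε
  | succ n ih =>
    by_cases hgood : ∃ t, ∀ l, offDiagonal v (fun b ↦ φ (b :: t)) l ≤ ε
    · obtain ⟨t, ht⟩ := hgood
      exact ⟨fun l ↦ l :: t, fun _ _ h ↦ (List.cons.inj h).1, fun l ↦ List.mem_cons_self, ht⟩
    push Not at hgood
    choose a ha using hgood
    have hcons : Function.Injective fun t ↦ a t :: t := fun _ _ h ↦ (List.cons.inj h).2
    obtain ⟨ψ, hψ, hmem, hle⟩ := ih (hφ.comp hcons) fun t ↦ by
      have hsplit := offDiagonal_cons_add_le hmono hadd hφ a t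
      have hbound := hn (a t :: t)
      push_cast at hbound
      change offDiagonal v (fun t ↦ φ (a t :: t)) t ≤ n * ε
      linarith [ha t]
    exact ⟨fun l ↦ a (ψ l) :: ψ l, hcons.comp hψ, fun l ↦ List.mem_cons_of_mem _ (hmem l), hle⟩

lemma exists_offDiagonal_le {v : List L → Set (List L) → ℝ} (hmono : ∀ i, Monotone (v i))
    (hadd : ∀ i A B, Disjoint A B → v i A + v i B ≤ v i (A ∪ B)) {C : ℝ} (hC : ∀ i A, v i A ≤ C)
    {ε : ℝ} (hε : 0 < ε) :
    ∃ ψ : L → List L, Function.Injective ψ ∧ (∀ l, l ∈ ψ l) ∧ ∀ l, offDiagonal v ψ l ≤ ε := by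
  obtain ⟨n, hn⟩ := exists_nat_ge (C / ε)
  exact exists_offDiagonal_le_of_le_nat_mul hmono hadd hε.le n Function.injective_id
    fun t ↦ (hC _ _).trans ((div_le_iff₀ hε).1 hn)

end Rosenthal

end Combinatorics

section Functionals

variable {X : Type*} [TopologicalSpace X] [DiscreteTopology X]

/-- The indicator function `1_A` as an element of `U_b(X)`. -/
noncomputable def setIndicator (A : Set X) : X →ᵇ ℝ :=
  BoundedContinuousFunction.indicator A (isClopen_discrete A)

lemma setIndicator_apply_of_mem {A : Set X} {x : X} (hx : x ∈ A) : setIndicator A x = 1 :=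
  Set.indicator_of_mem hx 1

lemma setIndicator_apply_of_notMem {A : Set X} {x : X} (hx : x ∉ A) : setIndicator A x = 0 :=
  Set.indicator_of_notMem hx 1

lemma norm_setIndicator_le_one (A : Set X) : ‖setIndicator A‖ ≤ 1 := by
  refine (norm_le zero_le_one).2 fun x ↦ ?_
  by_cases hx : x ∈ A
  · simp [setIndicator_apply_of_mem hx]
  · simp [setIndicator_apply_of_notMem hx]

/-- The mass `μ({x})` of a bounded finitely additive measure at a point. -/
noncomputable def pointMass (μ : StrongDual ℝ (X →ᵇ ℝ)) (x : X) : ℝ := μ (setIndicator {x})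

/-- The restriction `f ↦ μ (1_A f)` of a bounded finitely additive measure to a set. Its norm is
the total variation of `μ` on `A`. -/
noncomputable def dualRestrict (μ : StrongDual ℝ (X →ᵇ ℝ)) (A : Set X) : StrongDual ℝ (X →ᵇ ℝ) :=
  μ ∘L ContinuousLinearMap.mul ℝ (X →ᵇ ℝ) (setIndicator A)

variable (μ : StrongDual ℝ (X →ᵇ ℝ))

lemma dualRestrict_apply (A : Set X) (f : X →ᵇ ℝ) :
    dualRestrict μ A f = μ (setIndicator A * f) := rfl

lemma norm_setIndicator_mul_le (A : Set X) (f : X →ᵇ ℝ) : ‖setIndicator A * f‖ ≤ ‖f‖ :=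
  (norm_mul_le _ _).trans (mul_le_of_le_one_left (norm_nonneg f) (norm_setIndicator_le_one A))

lemma norm_dualRestrict_le (A : Set X) : ‖dualRestrict μ A‖ ≤ ‖μ‖ :=
  ContinuousLinearMap.opNorm_le_bound _ (norm_nonneg μ) fun f ↦
    μ.le_opNorm_of_le (norm_setIndicator_mul_le A f)

lemma dualRestrict_dualRestrict (A B : Set X) :
    dualRestrict (dualRestrict μ A) B = dualRestrict μ (A ∩ B) := by
  ext f
  refine congrArg μ (BoundedContinuousFunction.ext fun x ↦ ?_)
  simp [setIndicator, Set.inter_indicator_one, mul_assoc]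

lemma norm_dualRestrict_mono : Monotone fun A ↦ ‖dualRestrict μ A‖ := fun A B hAB ↦ by
  simpa only [dualRestrict_dualRestrict, Set.inter_eq_self_of_subset_right hAB] using
    norm_dualRestrict_le (dualRestrict μ B) A

lemma norm_dualRestrict_apply_add_le {A B : Set X} (hAB : Disjoint A B) {f g : X →ᵇ ℝ}
    (hf : ‖f‖ ≤ 1) (hg : ‖g‖ ≤ 1) :
    ‖dualRestrict μ A f‖ + ‖dualRestrict μ B g‖ ≤ ‖dualRestrict μ (A ∪ B)‖ := by
  have signed {f g : X →ᵇ ℝ} (hf : ‖f‖ ≤ 1) (hg : ‖g‖ ≤ 1) :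
      dualRestrict μ A f + dualRestrict μ B g ≤ ‖dualRestrict μ (A ∪ B)‖ := by
    let k := setIndicator A * f + setIndicator B * g
    have hk : ‖k‖ ≤ 1 := by
      refine (norm_le zero_le_one).2 fun x ↦ ?_
      by_cases hx : x ∈ A
      · simpa [k, setIndicator_apply_of_mem hx,
          setIndicator_apply_of_notMem (Set.disjoint_left.1 hAB hx)] using
          (f.norm_coe_le_norm x).trans hf
      · simpa [k, setIndicator_apply_of_notMem hx] using
          ((setIndicator B * g).norm_coe_le_norm x).trans
            ((norm_setIndicator_mul_le B g).trans hg)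
    have hsum : dualRestrict μ A f + dualRestrict μ B g = dualRestrict μ (A ∪ B) k := by
      simp only [dualRestrict_apply, ← map_add]
      refine congrArg μ (BoundedContinuousFunction.ext fun x ↦ ?_)
      by_cases hx : x ∈ A ∪ B
      · simp [k, setIndicator_apply_of_mem hx]
      · simp [setIndicator_apply_of_notMem hx, setIndicator_apply_of_notMem (mt Or.inl hx),
          setIndicator_apply_of_notMem (mt Or.inr hx)]
    rw [hsum]
    exact (Real.le_norm_self _).trans (ContinuousLinearMap.unit_le_opNorm _ _ hk)
  have hpp := signed hf hg
  have hpn := signed hf (g := -g) (by rwa [norm_neg])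
  have hnp := signed (f := -f) (by rwa [norm_neg]) hg
  have hnn := signed (f := -f) (g := -g) (by rwa [norm_neg]) (by rwa [norm_neg])
  simp only [map_neg] at hpn hnp hnn
  rw [Real.norm_eq_abs, Real.norm_eq_abs]
  rcases abs_cases (dualRestrict μ A f) with ⟨hA, -⟩ | ⟨hA, -⟩ <;>
    rcases abs_cases (dualRestrict μ B g) with ⟨hB, -⟩ | ⟨hB, -⟩ <;> linarith

lemma norm_dualRestrict_add_le {A B : Set X} (hAB : Disjoint A B) :
    ‖dualRestrict μ A‖ + ‖dualRestrict μ B‖ ≤ ‖dualRestrict μ (A ∪ B)‖ := by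
  have hA (g : X →ᵇ ℝ) (hg : ‖g‖ ≤ 1) :
      ‖dualRestrict μ A‖ ≤ ‖dualRestrict μ (A ∪ B)‖ - ‖dualRestrict μ B g‖ := by
    refine ContinuousLinearMap.opNorm_le_of_unit_norm ?_ fun f hf ↦
      le_sub_iff_add_le.2 (norm_dualRestrict_apply_add_le μ hAB hf.le hg)
    simpa using norm_dualRestrict_apply_add_le μ hAB (f := 0) (by simp) hg
  refine le_sub_iff_add_le'.1 (ContinuousLinearMap.opNorm_le_of_unit_norm ?_ fun g hg ↦
    le_sub_comm.1 (hA g hg.le))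
  exact sub_nonneg.2 (norm_dualRestrict_mono μ Set.subset_union_left)

lemma dualRestrict_add_dualRestrict_of_support {A B : Set X} (hAB : Disjoint A B) {f : X →ᵇ ℝ}
    (hf : ∀ x ∉ A ∪ B, f x = 0) : dualRestrict μ A f + dualRestrict μ B f = μ f := by
  rw [dualRestrict_apply, dualRestrict_apply, ← map_add]
  refine congrArg μ (BoundedContinuousFunction.ext fun x ↦ ?_)
  by_cases hA : x ∈ A
  · simp [setIndicator_apply_of_mem hA,
      setIndicator_apply_of_notMem (Set.disjoint_left.1 hAB hA)]
  by_cases hB : x ∈ B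
  · simp [setIndicator_apply_of_notMem hA, setIndicator_apply_of_mem hB]
  · simp [hf x (by simp [hA, hB])]

lemma dualRestrict_image_apply {ι : Type*} {φ : ι → X} {F : Finset ι}
    (hφ : Set.InjOn φ F) (f : X →ᵇ ℝ) :
    dualRestrict μ (φ '' F) f = ∑ i ∈ F, pointMass μ (φ i) * f (φ i) := by
  have hdecomp : setIndicator (φ '' F) * f = ∑ i ∈ F, f (φ i) • setIndicator {φ i} := by
    ext x
    rw [BoundedContinuousFunction.coe_sum, Finset.sum_apply]
    by_cases hx : x ∈ φ '' F
    · obtain ⟨j, hj, rfl⟩ := hx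
      rw [Finset.sum_eq_single_of_mem j hj]
      · simp [setIndicator_apply_of_mem (Set.mem_image_of_mem φ hj),
          setIndicator_apply_of_mem (Set.mem_singleton (φ j))]
      · intro i hi hij
        simp [setIndicator_apply_of_notMem (A := {φ i}) (hφ.ne hj hi hij.symm)]
    · rw [Finset.sum_eq_zero]
      · simp [setIndicator_apply_of_notMem hx]
      · intro i hi
        have hne : x ∉ ({φ i} : Set X) := fun h ↦ hx ⟨i, hi, h.symm⟩
        simp [setIndicator_apply_of_notMem hne]
  simp only [dualRestrict_apply, hdecomp, map_sum, map_smul, smul_eq_mul, pointMass, mul_comm]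

lemma abs_pointMass_le_norm_dualRestrict (x : X) : |pointMass μ x| ≤ ‖dualRestrict μ {x}‖ := by
  have h : pointMass μ x = dualRestrict μ {x} (setIndicator {x}) := by
    refine congrArg μ (BoundedContinuousFunction.ext fun y ↦ ?_)
    by_cases hy : y ∈ ({x} : Set X)
    · simp [setIndicator_apply_of_mem hy]
    · simp [setIndicator_apply_of_notMem hy]
  rw [h, ← Real.norm_eq_abs]
  exact ContinuousLinearMap.unit_le_opNorm _ _ (norm_setIndicator_le_one _)

lemma sum_abs_pointMass_le (F : Finset X) : ∑ x ∈ F, |pointMass μ x| ≤ ‖dualRestrict μ F‖ := by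
  classical
  induction F using Finset.induction_on with
  | empty => exact (norm_nonneg (dualRestrict μ _)).trans' (Finset.sum_empty).le
  | insert a F ha ih =>
    rw [Finset.sum_insert ha, Finset.coe_insert, Set.insert_eq]
    exact (add_le_add (abs_pointMass_le_norm_dualRestrict μ a) ih).trans
      (norm_dualRestrict_add_le μ (Set.disjoint_singleton_left.2 (by simpa using ha)))

lemma summable_abs_pointMass : Summable fun x ↦ |pointMass μ x| :=
  summable_of_sum_le (fun _ ↦ abs_nonneg _) fun F ↦
    (sum_abs_pointMass_le μ F).trans (norm_dualRestrict_le μ F)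

end Functionals

section Compactification

variable {Y : Type*} [TopologicalSpace Y]

/-- The weak* closure `K` of the point evaluations in `M(Y)`. -/
def pointClosure (Y : Type*) [TopologicalSpace Y] : Set (WeakDual ℝ (Y →ᵇ ℝ)) :=
  closure (Set.range fun y ↦ StrongDual.toWeakDual (evalCLM ℝ y))

lemma norm_evalCLM_le_one (y : Y) : ‖(evalCLM ℝ y : StrongDual ℝ (Y →ᵇ ℝ))‖ ≤ 1 :=
  ContinuousLinearMap.opNorm_le_bound _ zero_le_one fun f ↦ by
    simpa using f.norm_coe_le_norm y

lemma isCompact_pointClosure : IsCompact (pointClosure Y) := by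
  refine (WeakDual.isCompact_closedBall (0 : StrongDual ℝ (Y →ᵇ ℝ)) 1).closure_of_subset ?_
  rintro _ ⟨y, rfl⟩
  exact mem_closedBall_zero_iff.2 (norm_evalCLM_le_one y)

end Compactification

section Convolution

open Filter Topology

variable {X Y Z : Type*} [TopologicalSpace X] [DiscreteTopology X]
  [TopologicalSpace Y] [DiscreteTopology Y] [TopologicalSpace Z]

/-- The map `ν ↦ μ ⋆ ν`, with both dual spaces carrying their weak* topologies. -/
noncomputable def weakConv (p : X → Y → Z) (μ : StrongDual ℝ (X →ᵇ ℝ))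
    (ν : WeakDual ℝ (Y →ᵇ ℝ)) : WeakDual ℝ (Z →ᵇ ℝ) :=
  StrongDual.toWeakDual (convMap p μ (WeakDual.toStrongDual ν))

/-- The translate `μ ⋆ δ_y`, that is, the image of the finitely additive measure `μ` under
`x ↦ p x y`. -/
noncomputable def convDirac (p : X → Y → Z) (μ : StrongDual ℝ (X →ᵇ ℝ)) (y : Y) :
    StrongDual ℝ (Z →ᵇ ℝ) :=
  convMap p μ (evalCLM ℝ y)

lemma norm_convDirac_le (p : X → Y → Z) (μ : StrongDual ℝ (X →ᵇ ℝ)) (y : Y) :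
    ‖convDirac p μ y‖ ≤ ‖μ‖ :=
  ContinuousLinearMap.opNorm_le_bound _ (norm_nonneg μ) fun h ↦
    μ.le_opNorm_of_le (h.norm_compContinuous_le ⟨(p · y), continuous_of_discreteTopology⟩)

lemma tendsto_convDirac_apply {p : X → Y → Z} {μ : StrongDual ℝ (X →ᵇ ℝ)}
    (hμ : ContinuousOn (weakConv p μ) (pointClosure Y)) {ι : Type*} {l : Filter ι} {y : ι → Y}
    {f : X →ᵇ ℝ} {h : Z →ᵇ ℝ} (hf : ∀ x, Tendsto (fun i ↦ h (p x (y i))) l (𝓝 (f x))) :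
    Tendsto (fun i ↦ convDirac p μ (y i) h) l (𝓝 (μ f)) := by
  refine (tendsto_iff_ultrafilter _ _ _).2 fun U hU ↦ ?_
  let δ : ι → WeakDual ℝ (Y →ᵇ ℝ) := fun i ↦ StrongDual.toWeakDual (evalCLM ℝ (y i))
  have δ_mem (i : ι) : δ i ∈ pointClosure Y := subset_closure ⟨y i, rfl⟩
  obtain ⟨ν, hν, hδ⟩ := isCompact_pointClosure.ultrafilter_le_nhds (U.map δ)
    (le_principal_iff.2 (Ultrafilter.mem_map.2 (univ_mem' δ_mem)))
  replace hδ : Tendsto δ U (𝓝 ν) := hδ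
  have inner_eq : innerConv p (WeakDual.toStrongDual ν) h = f := by
    ext x
    exact tendsto_nhds_unique (((WeakDual.eval_continuous _).tendsto ν).comp hδ)
      ((hf x).mono_left hU)
  have conv_tendsto : Tendsto (fun i ↦ weakConv p μ (δ i)) U (𝓝 (weakConv p μ ν)) :=
    (hμ ν hν).tendsto.comp (tendsto_nhdsWithin_iff.2 ⟨hδ, Eventually.of_forall δ_mem⟩)
  rw [← inner_eq]
  exact ((WeakDual.eval_continuous h).tendsto _).comp conv_tendsto

lemma L1Rep.continuous_weakConv {μ : StrongDual ℝ (X →ᵇ ℝ)} (hμ : L1Rep μ) (p : X → Y → Z) :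
    Continuous (weakConv p μ) := by
  obtain ⟨g, hg, hrep⟩ := hμ
  refine WeakDual.continuous_of_continuous_eval fun f ↦ ?_
  let fiber (x : X) : Y →ᵇ ℝ := f.compContinuous ⟨p x, continuous_of_discreteTopology⟩
  have fiber_summable : Summable fun x ↦ g x • fiber x := by
    refine .of_norm_bounded (hg.mul_right ‖f‖) fun x ↦ ?_
    rw [norm_smul, Real.norm_eq_abs]
    exact mul_le_mul_of_nonneg_left (f.norm_compContinuous_le _) (abs_nonneg _)
  have conv_eq (ν : WeakDual ℝ (Y →ᵇ ℝ)) : weakConv p μ ν f = ν (∑' x, g x • fiber x) := by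
    calc weakConv p μ ν f = ∑' x, g x * innerConv p (WeakDual.toStrongDual ν) f x := hrep _
      _ = ∑' x, WeakDual.toStrongDual ν (g x • fiber x) :=
        tsum_congr fun x ↦ (map_smul (WeakDual.toStrongDual ν) (g x) (fiber x)).symm
      _ = ν (∑' x, g x • fiber x) := ((WeakDual.toStrongDual ν).map_tsum fiber_summable).symm
  simp_rw [conv_eq]
  exact WeakDual.eval_continuous _

end Convolution

section Blocks

variable {X Z : Type*} [TopologicalSpace X] [TopologicalSpace Z] [DiscreteTopology Z]

lemma exists_norm_dualRestrict_biUnion_le {L : Type*} {ν : List L → StrongDual ℝ (Z →ᵇ ℝ)}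
    {C : ℝ} (hν : ∀ i, ‖ν i‖ ≤ C) {E : List L → Set Z}
    (hE : Pairwise (Function.onFun Disjoint E)) {ε : ℝ} (hε : 0 < ε) :
    ∃ ψ : L → List L, Function.Injective ψ ∧ (∀ l, l ∈ ψ l) ∧
      ∀ l, ‖dualRestrict (ν (ψ l)) (⋃ k ∈ ({l}ᶜ : Set L), E (ψ k))‖ ≤ ε := by
  obtain ⟨ψ, hψ, hmem, hle⟩ := exists_offDiagonal_le
    (v := fun i A ↦ ‖dualRestrict (ν i) (⋃ j ∈ A, E j)‖)
    (fun i A B hAB ↦ norm_dualRestrict_mono (ν i) (Set.biUnion_subset_biUnion_left hAB))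
    (fun i A B hAB ↦ by
      rw [Set.biUnion_union]
      refine norm_dualRestrict_add_le (ν i) ?_
      simp only [Set.disjoint_iUnion_left, Set.disjoint_iUnion_right]
      exact fun j hj k hk ↦ hE (hAB.ne_of_mem hk hj))
    (fun i A ↦ (norm_dualRestrict_le _ _).trans (hν i)) hε
  refine ⟨ψ, hψ, hmem, fun l ↦ ?_⟩
  simpa only [offDiagonal, Set.biUnion_image] using hle l

lemma abs_apply_sub_dualRestrict_apply_le (ν : StrongDual ℝ (Z →ᵇ ℝ)) {ι : Type*} {E : ι → Set Z}
    (hE : Pairwise (Function.onFun Disjoint E)) {h : Z →ᵇ ℝ} (hh : ∀ z ∉ ⋃ i, E i, h z = 0)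
    (i : ι) :
    |ν h - dualRestrict ν (E i) h| ≤ ‖dualRestrict ν (⋃ j ∈ ({i}ᶜ : Set ι), E j)‖ * ‖h‖ := by
  have hdisj : Disjoint (E i) (⋃ j ∈ ({i}ᶜ : Set ι), E j) := by
    simp only [Set.disjoint_iUnion_right]
    exact fun j hj ↦ hE (Ne.symm hj)
  have hdecomp := dualRestrict_add_dualRestrict_of_support ν hdisj (f := h) fun z hz ↦
    hh z fun hz' ↦ hz <| by
      obtain ⟨j, hj⟩ := Set.mem_iUnion.1 hz'
      by_cases hji : j = i
      · exact .inl (hji ▸ hj)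
      · exact .inr (Set.mem_biUnion hji hj)
  rw [← hdecomp, add_sub_cancel_left]
  exact (dualRestrict ν _).le_opNorm h

lemma exists_glue {ι : Type*} {φ : ι → X → Z} {G : ι → Set X} (hφ : ∀ i, Set.InjOn (φ i) (G i))
    (hdisj : Pairwise (Function.onFun Disjoint fun i ↦ φ i '' G i)) (f : X →ᵇ ℝ) :
    ∃ h : Z →ᵇ ℝ, ‖h‖ ≤ ‖f‖ ∧ (∀ i, ∀ x ∈ G i, h (φ i x) = f x) ∧
      ∀ z ∉ ⋃ i, φ i '' G i, h z = 0 := by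
  let φ' : (Σ i, G i) → Z := fun s ↦ φ s.1 s.2
  have φ'_injective : Function.Injective φ' := by
    rintro ⟨i, x, hx⟩ ⟨j, x', hx'⟩ hxx'
    obtain rfl : i = j := by_contra fun hij ↦
      Set.disjoint_left.1 (hdisj hij) ⟨x, hx, rfl⟩ ⟨x', hx', hxx'.symm⟩
    obtain rfl := hφ i hx hx' hxx'
    rfl
  let h₀ : Z → ℝ := Function.extend φ' (fun s ↦ f s.2) 0
  have h₀_apply (s : Σ i, G i) : h₀ (φ' s) = f s.2 := φ'_injective.extend_apply _ _ s
  have h₀_zero {z : Z} (hz : ¬∃ s, φ' s = z) : h₀ z = 0 := Function.extend_apply' _ _ z hz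
  have h₀_le (z : Z) : ‖h₀ z‖ ≤ ‖f‖ := by
    by_cases hz : ∃ s, φ' s = z
    · obtain ⟨s, rfl⟩ := hz
      exact h₀_apply s ▸ f.norm_coe_le_norm _
    · simp [h₀_zero hz]
  refine ⟨ofNormedAddCommGroup h₀ continuous_of_discreteTopology ‖f‖ h₀_le,
    norm_ofNormedAddCommGroup_le _ (norm_nonneg f) h₀_le, fun i x hx ↦ h₀_apply ⟨i, x, hx⟩,
    fun z hz ↦ h₀_zero ?_⟩
  rintro ⟨⟨i, x, hx⟩, rfl⟩
  exact hz (Set.mem_iUnion.2 ⟨i, x, hx, rfl⟩)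

end Blocks
section TopologicalCentre

open Filter Topology

universe u

variable {X Y Z : Type u} {p : X → Y → Z}

lemma exists_mem_disjoint_image [Infinite X]
    (hp : ∀ P : Set Z, #P < #X → ∀ x, #{y | p x y ∈ P} < #X) (F : Finset X) {Q : Set Y}
    (hQ : #X ≤ #Q) {P : Set Z} (hP : #P < #X) : ∃ y ∈ Q, Disjoint ((p · y) '' F) P := by
  have hitting_lt : #(⋃ x ∈ F, {y | p x y ∈ P} : Set Y) < #X :=
    mk_biUnion_finset_lt (aleph0_le_mk X) F fun x _ ↦ hp P hP x
  obtain ⟨y, hyQ, hy⟩ : (Q \ ⋃ x ∈ F, {y | p x y ∈ P}).Nonempty := by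
    rw [← Set.nonempty_coe_sort, ← mk_ne_zero_iff]
    exact ((mk_ne_zero X).bot_lt.trans_le (le_mk_sdiff_of_mk_lt (aleph0_le_mk X) hQ hitting_lt)).ne'
  refine ⟨y, hyQ, Set.disjoint_left.2 ?_⟩
  rintro _ ⟨x, hx, rfl⟩ hxP
  exact hy (Set.mem_biUnion hx hxP)

variable [TopologicalSpace X] [DiscreteTopology X] [TopologicalSpace Y] [DiscreteTopology Y]
  [TopologicalSpace Z] [DiscreteTopology Z]

/-- The mass that `μ ⋆ δ_y` puts on the translate `p x y` of the point `x`; if `p · y` is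
injective it equals the mass of `μ` at `x`, but not in general. -/
noncomputable def translateMass (p : X → Y → Z) (μ : StrongDual ℝ (X →ᵇ ℝ)) (y : Y) (x : X) : ℝ :=
  pointMass (convDirac p μ y) (p x y)

variable [Infinite X] {μ : StrongDual ℝ (X →ᵇ ℝ)}

lemma exists_disjoint_blocks_norm_dualRestrict_le
    (hp : ∀ P : Set Z, #P < #X → ∀ x, #{y | p x y ∈ P} < #X)
    (μ : StrongDual ℝ (X →ᵇ ℝ)) {Q : Finset X → Set Y} (hQ : ∀ F, #X ≤ #(Q F)) {ε : ℝ}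
    (hε : 0 < ε) :
    ∃ (G : Finset X → Finset X) (y : Finset X → Y), (∀ F, F ⊆ G F) ∧ (∀ F, y F ∈ Q (G F)) ∧
      Pairwise (Function.onFun Disjoint fun F ↦ (p · (y F)) '' G F) ∧
      ∀ F, ‖dualRestrict (convDirac p μ (y F))
        (⋃ F' ∈ ({F}ᶜ : Set (Finset X)), (p · (y F')) '' G F')‖ ≤ ε := by
  classical
  let G (l : List (Finset X)) : Finset X := l.toFinset.biUnion id
  have hcard : #(List (Finset X)) ≤ #X := by
    rw [mk_list_eq_mk, mk_finset_of_infinite]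
  obtain ⟨y, hyQ, hdisj⟩ := exists_pairwise_disjoint_of_finite (aleph0_le_mk X) hcard
    (Q := fun l ↦ Q (G l)) (E := fun l y ↦ (p · y) '' G l)
    (fun l y ↦ (G l).finite_toSet.image _)
    fun l P hP ↦ exists_mem_disjoint_image hp (G l) (hQ (G l)) hP
  obtain ⟨ψ, hψ, hmem, hle⟩ := exists_norm_dualRestrict_biUnion_le
    (fun l ↦ norm_convDirac_le p μ (y l)) hdisj hε
  refine ⟨G ∘ ψ, y ∘ ψ, fun F ↦ ?_, fun F ↦ hyQ (ψ F), fun F F' hF ↦ hdisj (hψ.ne hF), hle⟩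
  exact Finset.subset_biUnion_of_mem id (List.mem_toFinset.2 (hmem F))

lemma exists_abs_sum_translateMass_sub_le
    (hp : ∀ P : Set Z, #P < #X → ∀ x, #{y | p x y ∈ P} < #X)
    (hμ : ContinuousOn (weakConv p μ) (pointClosure Y)) {Q : Finset X → Set Y}
    (hQ : ∀ F, #X ≤ #(Q F)) (hinj : ∀ F, ∀ y ∈ Q F, Set.InjOn (p · y) F) (f : X →ᵇ ℝ)
    (F₀ : Finset X) {ε : ℝ} (hε : 0 < ε) :
    ∃ F ⊇ F₀, ∃ y ∈ Q F, |∑ x ∈ F, translateMass p μ y x * f x - μ f| ≤ ε := by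
  have hη : 0 < ε / 2 / (‖f‖ + 1) := by positivity
  obtain ⟨G, y, hG, hy, hdisj, hothers⟩ := exists_disjoint_blocks_norm_dualRestrict_le hp μ hQ hη
  have hinjG (F : Finset X) : Set.InjOn (p · (y F)) (G F) := hinj _ _ (hy F)
  obtain ⟨h, hnorm, hblock, hzero⟩ := exists_glue hinjG hdisj f
  have hlim : Tendsto (fun F ↦ convDirac p μ (y F) h) atTop (𝓝 (μ f)) :=
    tendsto_convDirac_apply hμ fun x ↦ tendsto_const_nhds.congr' <|
      (eventually_ge_atTop {x}).mono fun F hF ↦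
        (hblock F x (hG F (Finset.singleton_subset_iff.1 hF))).symm
  obtain ⟨F, hclose, hF⟩ := ((hlim.eventually (Metric.closedBall_mem_nhds _ (half_pos hε))).and
    (eventually_ge_atTop F₀)).exists
  refine ⟨G F, hF.trans (hG F), y F, hy F, ?_⟩
  let E (F : Finset X) : Set Z := (p · (y F)) '' G F
  have hsum : dualRestrict (convDirac p μ (y F)) (E F) h =
      ∑ x ∈ G F, translateMass p μ (y F) x * f x :=
    (dualRestrict_image_apply _ (hinjG F) h).trans <|
      Finset.sum_congr rfl fun x hx ↦ congrArg _ (hblock F x hx)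
  have hrest : |convDirac p μ (y F) h - dualRestrict (convDirac p μ (y F)) (E F) h| ≤ ε / 2 := by
    calc |convDirac p μ (y F) h - dualRestrict (convDirac p μ (y F)) (E F) h|
        ≤ ‖dualRestrict (convDirac p μ (y F)) (⋃ F' ∈ ({F}ᶜ : Set (Finset X)), E F')‖ * ‖h‖ :=
          abs_apply_sub_dualRestrict_apply_le _ hdisj hzero F
      _ ≤ ε / 2 / (‖f‖ + 1) * (‖f‖ + 1) := by
          gcongr
          exacts [hothers F, hnorm.trans (le_add_of_nonneg_right zero_le_one)]
      _ = ε / 2 := div_mul_cancel₀ _ (by positivity)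
  rw [hsum, abs_sub_comm] at hrest
  calc |∑ x ∈ G F, translateMass p μ (y F) x * f x - μ f| ≤ ε / 2 + ε / 2 :=
        (abs_sub_le _ _ _).trans (add_le_add hrest hclose)
    _ = ε := add_halves ε

lemma exists_mk_lt_abs_translateMass_sub_pointMass
    (hp : ∀ P : Set Z, #P < #X → ∀ x, #{y | p x y ∈ P} < #X)
    (hμ : ContinuousOn (weakConv p μ) (pointClosure Y)) (x : X) {δ : ℝ} (hδ : 0 < δ) :
    ∃ F : Finset X, #{y | Set.InjOn (p · y) F ∧
      δ < |translateMass p μ y x - pointMass μ x|} < #X := by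
  by_contra! hlarge
  obtain ⟨F, hxF, y, ⟨-, hy⟩, hle⟩ := exists_abs_sum_translateMass_sub_le hp hμ hlarge
    (fun F y hy ↦ hy.1) (setIndicator {x}) {x} hδ
  refine hy.not_ge (hle.trans' (le_of_eq ?_))
  rw [Finset.sum_eq_single_of_mem x (Finset.singleton_subset_iff.1 hxF) fun x' _ hx' ↦ ?_,
    setIndicator_apply_of_mem (Set.mem_singleton x), mul_one, pointMass]
  rw [setIndicator_apply_of_notMem (A := {x}) hx', mul_zero]

lemma le_mk_sum_abs_translateMass_sub_le
    (hsep : ∀ F : Finset X, #X ≤ #{y | Set.InjOn (p · y) F})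
    (hp : ∀ P : Set Z, #P < #X → ∀ x, #{y | p x y ∈ P} < #X)
    (hμ : ContinuousOn (weakConv p μ) (pointClosure Y)) (F : Finset X) {ε : ℝ} (hε : 0 < ε) :
    #X ≤ #{y | Set.InjOn (p · y) F ∧
      ∑ x ∈ F, |translateMass p μ y x - pointMass μ x| ≤ ε} := by
  classical
  have hδ : 0 < ε / (F.card + 1) := by positivity
  choose H hH using fun x ↦ exists_mk_lt_abs_translateMass_sub_pointMass hp hμ x hδ
  let bad (x : X) : Set Y := {y | Set.InjOn (p · y) (H x) ∧
    ε / (F.card + 1) < |translateMass p μ y x - pointMass μ x|}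
  refine (le_mk_sdiff_of_mk_lt (aleph0_le_mk X) (hsep (F ∪ F.biUnion H))
    (mk_biUnion_finset_lt (B := bad) (aleph0_le_mk X) F fun x _ ↦ hH x)).trans
    (mk_le_mk_of_subset ?_)
  rintro y ⟨hy, hgood⟩
  have hle (x : X) (hx : x ∈ F) :
      |translateMass p μ y x - pointMass μ x| ≤ ε / (F.card + 1) := by
    by_contra! hlt
    refine hgood (Set.mem_biUnion hx ⟨Set.InjOn.mono ?_ hy, hlt⟩)
    exact_mod_cast (Finset.subset_biUnion_of_mem H hx).trans Finset.subset_union_right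
  refine ⟨hy.mono (by exact_mod_cast Finset.subset_union_left), ?_⟩
  calc ∑ x ∈ F, |translateMass p μ y x - pointMass μ x|
      ≤ F.card * (ε / (F.card + 1)) := by
        simpa only [nsmul_eq_mul] using Finset.sum_le_card_nsmul F _ _ hle
    _ ≤ (F.card + 1) * (ε / (F.card + 1)) := by gcongr; linarith
    _ = ε := mul_div_cancel₀ _ (by positivity)

lemma exists_abs_sum_pointMass_sub_le
    (hsep : ∀ F : Finset X, #X ≤ #{y | Set.InjOn (p · y) F})
    (hp : ∀ P : Set Z, #P < #X → ∀ x, #{y | p x y ∈ P} < #X)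
    (hμ : ContinuousOn (weakConv p μ) (pointClosure Y)) (f : X →ᵇ ℝ) (F₀ : Finset X) {ε : ℝ}
    (hε : 0 < ε) : ∃ F ⊇ F₀, |∑ x ∈ F, pointMass μ x * f x - μ f| ≤ ε := by
  have hη : 0 < ε / 2 / (‖f‖ + 1) := by positivity
  obtain ⟨F, hF, y, ⟨-, hmass⟩, hy⟩ := exists_abs_sum_translateMass_sub_le hp hμ
    (fun F ↦ le_mk_sum_abs_translateMass_sub_le hsep hp hμ F hη) (fun F y hy ↦ hy.1) f F₀
    (half_pos hε)
  have hsums : |∑ x ∈ F, pointMass μ x * f x - ∑ x ∈ F, translateMass p μ y x * f x| ≤ ε / 2 := by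
    calc |∑ x ∈ F, pointMass μ x * f x - ∑ x ∈ F, translateMass p μ y x * f x|
        ≤ ∑ x ∈ F, |translateMass p μ y x - pointMass μ x| * |f x| := by
          rw [abs_sub_comm]
          simp only [← Finset.sum_sub_distrib, ← sub_mul, ← abs_mul]
          exact Finset.abs_sum_le_sum_abs _ F
      _ ≤ ∑ x ∈ F, |translateMass p μ y x - pointMass μ x| * (‖f‖ + 1) := by
          gcongr with x
          exact (f.norm_coe_le_norm x).trans (le_add_of_nonneg_right zero_le_one)
      _ = (∑ x ∈ F, |translateMass p μ y x - pointMass μ x|) * (‖f‖ + 1) :=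
          (Finset.sum_mul _ _ _).symm
      _ ≤ ε / 2 / (‖f‖ + 1) * (‖f‖ + 1) := by gcongr
      _ = ε / 2 := div_mul_cancel₀ _ (by positivity)
  refine ⟨F, hF, ?_⟩
  calc |∑ x ∈ F, pointMass μ x * f x - μ f| ≤ ε / 2 + ε / 2 :=
        (abs_sub_le _ _ _).trans (add_le_add hsums hy)
    _ = ε := add_halves ε

lemma L1Rep.of_continuousOn_weakConv
    (hsep : ∀ F : Finset X, #X ≤ #{y | Set.InjOn (p · y) F})
    (hp : ∀ P : Set Z, #P < #X → ∀ x, #{y | p x y ∈ P} < #X)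
    (hμ : ContinuousOn (weakConv p μ) (pointClosure Y)) : L1Rep μ := by
  refine ⟨pointMass μ, summable_abs_pointMass μ, fun f ↦ ?_⟩
  have hsummable : Summable fun x ↦ pointMass μ x * f x :=
    .of_norm_bounded ((summable_abs_pointMass μ).mul_right ‖f‖) fun x ↦
      (norm_mul_le _ _).trans (mul_le_mul_of_nonneg_left (f.norm_coe_le_norm x) (norm_nonneg _))
  refine (eq_of_forall_dist_le fun ε hε ↦ ?_).symm
  exact le_of_tendsto_of_frequently (hsummable.hasSum.dist tendsto_const_nhds) <|
    frequently_atTop.2 fun F₀ ↦ exists_abs_sum_pointMass_sub_le hsep hp hμ f F₀ hε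

theorem stmt13_general (hsep : ∀ F : Finset X, #X ≤ #{y | Set.InjOn (p · y) F})
    (hp : ∀ P : Set Z, #P < #X → ∀ x, #{y | p x y ∈ P} < #X)
    {S : Set (WeakDual ℝ (Y →ᵇ ℝ))} (hS : pointClosure Y ⊆ S) :
    ContinuousOn (weakConv p μ) S ↔ L1Rep μ :=
  ⟨fun h ↦ .of_continuousOn_weakConv hsep hp (h.mono hS),
    fun h ↦ (h.continuous_weakConv p).continuousOn⟩

end TopologicalCentre

/-- For an infinite semigroup satisfying (1) and (2) and any convolution subsemigroup
`S ⊆ M(X)` containing the uniform compactification `K`, the topological centre of `S`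
is the set of `ℓ¹`-representable elements of `S`. -/
theorem stmt13 {X : Type*} [Semigroup X] [TopologicalSpace X] [DiscreteTopology X] [Infinite X]
    (h1 : ∀ F : Finset X,
      #{z : X | ∀ x ∈ F, ∀ y ∈ F, x ≠ y → x * z ≠ y * z} = #X)
    (h2 : ∀ P : Set X, #↥P < #X → ∀ x : X, #{z : X | x * z ∈ P} < #X)
    (S : Set (StrongDual ℝ (X →ᵇ ℝ)))
    (hSmul : ∀ μ ∈ S, ∀ ν ∈ S, convMap (· * ·) μ ν ∈ S)
    (hKS : {μ : StrongDual ℝ (X →ᵇ ℝ) |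
      StrongDual.toWeakDual μ ∈ closure (Set.range fun x : X => StrongDual.toWeakDual (evalCLM ℝ x))} ⊆ S) :
    {μ ∈ S | ContinuousOn
      (fun ν : WeakDual ℝ (X →ᵇ ℝ) =>
        StrongDual.toWeakDual (convMap (· * ·) μ (WeakDual.toStrongDual ν)))
      ((fun μ : StrongDual ℝ (X →ᵇ ℝ) => StrongDual.toWeakDual μ) '' S)} =
    {μ ∈ S | L1Rep μ} :=
  Set.ext fun _ ↦ and_congr_right fun _ ↦ stmt13_general
    (fun F ↦ (h1 F).ge.trans <| mk_le_mk_of_subset fun _ hz x hx y hy ↦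
      not_imp_not.1 (hz x hx y hy)) h2 fun _ hν ↦ ⟨_, hKS hν, rfl⟩
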